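/- arXiv:2604.23168 — 3 statements merged into one kernel-verified Lean document; each statement's English description precedes it below -/
import Mathlib

section
/- Let 0 < β < 1. Let A and B be finite sequences of real numbers such that B is a suffix of A and (1 - β)·f(A) ≤ f(B). Then for every finite sequence C of real numbers, (1 - 1/(2 - β))·f(A ++ C) ≤ f(B ++ C). In other words, the maximum subarray sum is (1/(2-β), β)-smooth. -/
/-- Maximum subarray sum of a finite sequence: the maximum of 0 and all sums of
contiguous subsequences (the empty infix, of sum 0, is among the infixes). -/
noncomputable def msum (W : List ℝ) : ℝ :=
  ((W.inits.flatMap List.tails).map List.sum).foldr max 0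

/-- Maximum prefix sum: the maximum of 0 and all prefix sums. -/
noncomputable def presum (W : List ℝ) : ℝ :=
  (W.inits.map List.sum).foldr max 0

/-- Maximum suffix sum: the maximum of 0 and all suffix sums. -/
noncomputable def sufsum (W : List ℝ) : ℝ :=
  (W.tails.map List.sum).foldr max 0

theorem foldr_max_le_iff_aux (L : List ℝ) (x : ℝ) :
    L.foldr max 0 ≤ x ↔ 0 ≤ x ∧ ∀ y ∈ L, y ≤ x := by
  induction L with
  | nil => simp
  | cons a L ih =>
    simp only [List.foldr_cons, max_le_iff, ih, List.mem_cons, forall_eq_or_imp]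
    tauto

theorem msum_le_iff (W : List ℝ) (x : ℝ) :
    msum W ≤ x ↔ 0 ≤ x ∧ ∀ D S E : List ℝ, D ++ S ++ E = W → S.sum ≤ x := by
  unfold msum
  rw [foldr_max_le_iff_aux]
  refine and_congr_right fun _ => ⟨?_, ?_⟩
  · intro h D S E hW
    refine h _ (List.mem_map.2 ⟨S, List.mem_flatMap.2 ⟨D ++ S, ?_, ?_⟩, rfl⟩)
    · exact (List.mem_inits _ _).2 ⟨E, hW⟩
    · exact (List.mem_tails _ _).2 ⟨D, rfl⟩
  · intro h y hy
    obtain ⟨S, hS, rfl⟩ := List.mem_map.1 hy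
    obtain ⟨T, hT, hS⟩ := List.mem_flatMap.1 hS
    obtain ⟨E, hE⟩ := (List.mem_inits _ _).1 hT
    obtain ⟨D, hD⟩ := (List.mem_tails _ _).1 hS
    exact h D S E (by rw [hD, hE])

theorem msum_nonneg (W : List ℝ) : 0 ≤ msum W := ((msum_le_iff W _).1 le_rfl).1

theorem sum_le_msum {W : List ℝ} (D S E : List ℝ) (h : D ++ S ++ E = W) : S.sum ≤ msum W :=
  ((msum_le_iff W _).1 le_rfl).2 D S E h

theorem msum_left_le (B C : List ℝ) : msum B ≤ msum (B ++ C) :=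
  (msum_le_iff _ _).2 ⟨msum_nonneg _, fun D S E h =>
    sum_le_msum D S (E ++ C) (by rw [← h]; simp)⟩

theorem msum_right_le (B C : List ℝ) : msum C ≤ msum (B ++ C) :=
  (msum_le_iff _ _).2 ⟨msum_nonneg _, fun D S E h =>
    sum_le_msum (B ++ D) S E (by rw [← h]; simp)⟩

theorem msum_append_le (A C : List ℝ) : msum (A ++ C) ≤ msum A + msum C := by
  have hA := msum_nonneg A
  have hC := msum_nonneg C
  refine (msum_le_iff _ _).2 ⟨by linarith, fun D S E h => ?_⟩
  rcases List.append_eq_append_iff.1 h with ⟨X, h1, h2⟩ | ⟨X, h1, h2⟩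
  · have := sum_le_msum D S X h1.symm
    linarith
  · rcases List.append_eq_append_iff.1 h1 with ⟨Y, h3, h4⟩ | ⟨Y, h3, h4⟩
    · have e1 := sum_le_msum D Y [] (W := A) (by simp [h3])
      have e2 := sum_le_msum [] X E (W := C) (by simp [h2])
      rw [h4, List.sum_append]
      linarith
    · have := sum_le_msum Y S E (W := C) (by simp [h2, h4])
      linarith

/-- The maximum subarray sum is (1/(2-β), β)-smooth. -/
theorem msum_smooth (β : ℝ) (hβ0 : 0 < β) (hβ1 : β < 1)
    (A B : List ℝ) (hBA : B <:+ A) (hfB : (1 - β) * msum A ≤ msum B) :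
    ∀ C : List ℝ, (1 - 1 / (2 - β)) * msum (A ++ C) ≤ msum (B ++ C) := by
  intro C
  have h1 := msum_append_le A C
  have h2 := msum_left_le B C
  have h3 := msum_right_le B C
  have hpos : 0 < 2 - β := by linarith
  have e : 1 - 1 / (2 - β) = (1 - β) / (2 - β) := by
    field_simp
    ring
  rw [e, div_mul_eq_mul_div, div_le_iff₀ hpos]
  nlinarith [mul_le_mul_of_nonneg_left h1 (by linarith : 0 ≤ 1 - β),
    mul_le_mul_of_nonneg_left h3 (by linarith : 0 ≤ 1 - β)]
end

section
/- Let 0 ≤ ε ≤ 1. Let A and B be finite sequences of real numbers such that B is a suffix of A, f(B) ≥ (1 - ε)·f(A), and Suf(B) ≥ (1 - ε)·Suf(A). Then for every finite sequence C of real numbers, f(B ++ C) ≥ (1 - ε)·f(A ++ C). -/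
theorem le_foldr_max (L : List ℝ) (x : ℝ) (h : x ∈ L) : x ≤ L.foldr max 0 := by
  induction L with
  | nil => simp at h
  | cons a L ih =>
    rcases List.mem_cons.1 h with rfl | h
    · exact le_max_left _ _
    · exact (ih h).trans (le_max_right _ _)

theorem foldr_max_nonneg (L : List ℝ) : 0 ≤ L.foldr max 0 := by
  induction L with
  | nil => simp
  | cons a L ih => exact ih.trans (le_max_right _ _)

theorem foldr_max_mem (L : List ℝ) : L.foldr max 0 = 0 ∨ L.foldr max 0 ∈ L := by
  induction L with
  | nil => simp
  | cons a L ih =>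
    simp only [List.foldr_cons, List.mem_cons]
    rcases max_choice a (L.foldr max 0) with h | h <;> rw [h] <;> tauto

theorem le_msum (I W : List ℝ) (h : I <:+: W) : I.sum ≤ msum W := by
  apply le_foldr_max
  obtain ⟨s, t, rfl⟩ := h
  refine List.mem_map_of_mem (List.mem_flatMap.2 ⟨s ++ I, ?_, ?_⟩)
  · exact (List.mem_inits _ _).2 ⟨t, rfl⟩
  · exact (List.mem_tails _ _).2 ⟨s, rfl⟩

theorem exists_msum (W : List ℝ) : ∃ I, I <:+: W ∧ msum W = I.sum := by
  rcases foldr_max_mem ((W.inits.flatMap List.tails).map List.sum) with h | h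
  · exact ⟨[], List.nil_infix, by simpa [msum] using h⟩
  · obtain ⟨I, hI, e⟩ := List.mem_map.1 h
    obtain ⟨P, hP, hI⟩ := List.mem_flatMap.1 hI
    rw [List.mem_inits] at hP
    rw [List.mem_tails] at hI
    exact ⟨I, hI.isInfix.trans hP.isInfix, e.symm⟩

theorem le_sufsum (I W : List ℝ) (h : I <:+ W) : I.sum ≤ sufsum W :=
  le_foldr_max _ _ (List.mem_map_of_mem ((List.mem_tails _ _).2 h))

theorem exists_sufsum (W : List ℝ) : ∃ I, I <:+ W ∧ sufsum W = I.sum := by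
  rcases foldr_max_mem (W.tails.map List.sum) with h | h
  · exact ⟨[], List.nil_suffix, by simpa [sufsum] using h⟩
  · obtain ⟨I, hI, e⟩ := List.mem_map.1 h
    exact ⟨I, (List.mem_tails _ _).1 hI, e.symm⟩

theorem infix_append_cases (I A C : List ℝ) (h : I <:+: A ++ C) :
    I <:+: A ∨ I <:+: C ∨ ∃ S P, I = S ++ P ∧ S <:+ A ∧ P <+: C := by
  obtain ⟨s, t, h⟩ := h
  rcases List.append_eq_append_iff.1 h with ⟨u, h1, h2⟩ | ⟨u, h1, h2⟩
  · exact Or.inl ⟨s, u, h1.symm⟩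
  · rcases List.append_eq_append_iff.1 h1 with ⟨v, h3, h4⟩ | ⟨v, h3, h4⟩
    · exact Or.inr (Or.inr ⟨v, u, h4, ⟨s, h3.symm⟩, ⟨t, h2.symm⟩⟩)
    · exact Or.inr (Or.inl ⟨v, t, by rw [h2, h4]⟩)

/-- The improved pruning rule preserves the maximum subarray sum up to a
factor (1 - ε). -/
theorem msum_pruning (ε : ℝ) (hε0 : 0 ≤ ε) (hε1 : ε ≤ 1)
    (A B : List ℝ) (hBA : B <:+ A)
    (hf : msum B ≥ (1 - ε) * msum A)
    (hsuf : sufsum B ≥ (1 - ε) * sufsum A) :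
    ∀ C : List ℝ, msum (B ++ C) ≥ (1 - ε) * msum (A ++ C) := by
  intro C
  have hk : 0 ≤ 1 - ε := by linarith
  obtain ⟨I, hI, e⟩ := exists_msum (A ++ C)
  have h0 : 0 ≤ I.sum := e ▸ foldr_max_nonneg _
  rw [e]
  have hB : msum B ≤ msum (B ++ C) := by
    obtain ⟨J, hJ, e⟩ := exists_msum B
    rw [e]
    exact le_msum _ _ (hJ.trans (List.prefix_append B C).isInfix)
  rcases infix_append_cases I A C hI with h | h | ⟨S, P, rfl, hS, hP⟩
  · have := mul_le_mul_of_nonneg_left (le_msum I A h) hk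
    linarith
  · have := le_msum I (B ++ C) (h.trans (List.suffix_append B C).isInfix)
    nlinarith
  · rw [List.sum_append] at *
    rcases le_total 0 P.sum with hp | hp
    · obtain ⟨T, ⟨s, hT⟩, e2⟩ := exists_sufsum B
      obtain ⟨t, ht⟩ := hP
      have h1 : (T ++ P).sum ≤ msum (B ++ C) :=
        le_msum _ _ ⟨s, t, by rw [← hT, ← ht]; simp⟩
      rw [List.sum_append] at h1
      have h2 := mul_le_mul_of_nonneg_left (le_sufsum S A hS) hk
      nlinarith
    · have h1 := le_msum S A hS.isInfix
      have h2 : (1 - ε) * (S.sum + P.sum) ≤ (1 - ε) * msum A :=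
        mul_le_mul_of_nonneg_left (by linarith) hk
      linarith
end

section
/- For every finite sequence A of real numbers and every real number x, f(A ++ [x]) = max{ f(A), max{0, Suf(A) + x} }. (This is the correctness of the global-maximum update μ*_{i+1} = max{μ*_i, μ_{i+1}} in Kadane's algorithm.) -/
theorem foldr_max_le_iff (l : List ℝ) (c : ℝ) :
    l.foldr max 0 ≤ c ↔ 0 ≤ c ∧ ∀ y ∈ l, y ≤ c := by
  induction l with
  | nil => simp
  | cons a l ih =>
    simp only [List.foldr_cons, max_le_iff, ih, List.mem_cons, forall_eq_or_imp]
    tauto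

theorem msum_le_iff_s10 (W : List ℝ) (c : ℝ) :
    msum W ≤ c ↔ 0 ≤ c ∧ ∀ p, p <+: W → ∀ s, s <:+ p → s.sum ≤ c := by
  unfold msum
  rw [foldr_max_le_iff]
  simp only [List.mem_map, List.mem_flatMap, List.mem_inits, List.mem_tails]
  constructor
  · rintro ⟨h, k⟩
    exact ⟨h, fun p hp s hs => k _ ⟨s, ⟨p, hp, hs⟩, rfl⟩⟩
  · rintro ⟨h, k⟩
    refine ⟨h, ?_⟩
    rintro _ ⟨s, ⟨p, hp, hs⟩, rfl⟩
    exact k p hp s hs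

theorem sufsum_le_iff (W : List ℝ) (c : ℝ) :
    sufsum W ≤ c ↔ ∀ s, s <:+ W → s.sum ≤ c := by
  unfold sufsum
  rw [foldr_max_le_iff]
  simp only [List.mem_map, List.mem_tails]
  constructor
  · rintro ⟨h, k⟩ s hs
    exact k _ ⟨s, hs, rfl⟩
  · intro k
    refine ⟨by simpa using k [] (List.nil_suffix), ?_⟩
    rintro _ ⟨s, hs, rfl⟩
    exact k s hs

/-- Correctness of the global-maximum update in Kadane's algorithm. -/
theorem msum_concat (A : List ℝ) (x : ℝ) :
    msum (A ++ [x]) = max (msum A) (max 0 (sufsum A + x)) := by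
  apply eq_of_forall_ge_iff
  intro c
  rw [max_le_iff, max_le_iff, ← le_sub_iff_add_le, msum_le_iff_s10, msum_le_iff_s10, sufsum_le_iff]
  constructor
  · rintro ⟨h, k⟩
    refine ⟨⟨h, fun p hp s hs => k p (hp.trans (List.prefix_append _ _)) s hs⟩, h, ?_⟩
    rintro s ⟨t, rfl⟩
    have := k _ (List.prefix_refl _) (s ++ [x]) ⟨t, by simp⟩
    rw [List.sum_append, List.sum_singleton] at this
    linarith
  · rintro ⟨⟨h, k⟩, -, m⟩
    refine ⟨h, fun p hp s hs => ?_⟩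
    rcases List.prefix_concat_iff.1 hp with rfl | hp
    · rcases List.suffix_concat_iff.1 hs with rfl | ⟨t, rfl, ht⟩
      · simpa using h
      · have := m t ht
        rw [List.sum_append, List.sum_singleton]
        linarith
    · exact k p hp s hs
end
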